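/- Russo's formula for the DaC model: let W be a finite set of vertices of ℤ² and let A be an increasing event that depends only on the colours of the vertices in W. Then for every p ∈ [0,1], the function r ↦ ℙ_{p,r}(A) is differentiable on (0,1) and (d/dr) ℙ_{p,r}(A) = 𝔼_{p,r}[n(A)], where n(A) is the number of p-clusters that are pivotal for A. -/

import Mathlib

/-!
Common definitions for the Divide-and-Colour (DaC) model of
Bálint, Camia and Meester, "Sharp phase transition and critical
behaviour in 2D divide and colour models".

The model is built concretely: a single uniform random variable on `(0,1]`
is decomposed into countably many i.i.d. uniform random variables (via its
binary digits); one family of uniforms drives the Bernoulli(p) bond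
percolation (the edge configuration), and an independent family of uniforms
attaches an independent Bernoulli(r) colour to each bond cluster (the colour
of a cluster is determined by the uniform label of its canonical
representative, the vertex of minimal encoding).  The DaC measure
`ℙ_{p,r}` is the pushforward of Lebesgue measure on `(0,1]` under the map
producing the pair (edge configuration, colour configuration).
-/

open MeasureTheory ENNReal

namespace DaC

/-- Vertices of the lattice. -/
abbrev V : Type := ℤ × ℤ

/-- Square lattice adjacency: Euclidean distance `1`. -/
def SqAdj (u v : V) : Prop := (u.1 - v.1) ^ 2 + (u.2 - v.2) ^ 2 = 1

/-- `*`-adjacency (matching graph of the square lattice):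
Euclidean distance `1` or `√2`. -/
def StarAdj (u v : V) : Prop :=
  (u.1 - v.1) ^ 2 + (u.2 - v.2) ^ 2 = 1 ∨ (u.1 - v.1) ^ 2 + (u.2 - v.2) ^ 2 = 2

/-- Triangular lattice adjacency. -/
def TriAdj (u v : V) : Prop :=
  (u.1 - v.1, u.2 - v.2) ∈
    ({(1, 0), (-1, 0), (0, 1), (0, -1), (1, 1), (-1, -1)} : Set (ℤ × ℤ))

/-- Classical indicator of a proposition, as a boolean. -/
noncomputable def boolOf (P : Prop) : Bool := @decide P (Classical.propDecidable P)

/-- The `n`-th binary digit of a real number `x ∈ (0,1]`. -/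
noncomputable def bit (n : ℕ) (x : ℝ) : Bool := boolOf (⌊x * 2 ^ (n + 1)⌋ % 2 = 1)

/-- A countable family of i.i.d. uniform random variables on `[0,1]`, extracted
from a single uniform sample `x` by splitting its binary digits. -/
noncomputable def unif (i : ℕ) (x : ℝ) : ℝ :=
  ∑' k : ℕ, if bit (Nat.pair i k) x then ((2 : ℝ)⁻¹) ^ (k + 1) else 0

/-- A symmetric encoding of (unordered) pairs of vertices. -/
noncomputable def eIdx (u v : V) : ℕ :=
  min (Encodable.encode (u, v)) (Encodable.encode (v, u))

/-- The uniform label attached to the edge `{u,v}`. -/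
noncomputable def edgeU (u v : V) (x : ℝ) : ℝ := unif (2 * eIdx u v) x

/-- The uniform label attached to the vertex `v` (independent of the edge labels). -/
noncomputable def vtxU (v : V) (x : ℝ) : ℝ := unif (2 * Encodable.encode v + 1) x

/-- Edge configurations: a boolean (open/closed) for each (ordered) pair of
vertices; configurations arising from the model are symmetric and are
supported on pairs of adjacent vertices. -/
abbrev EdgeCfg : Type := V → V → Bool

/-- Colour configurations: a colour (black = `true`, white = `false`) for each vertex. -/
abbrev ColourCfg : Type := V → Bool

/-- Full configurations of the DaC model: an edge configuration together with
a colour configuration. -/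
abbrev Config : Type := EdgeCfg × ColourCfg

/-- The Bernoulli(p) edge configuration determined by the uniform sample `x`,
on the lattice with adjacency `adj`: an edge `{u,v}` of the lattice is open
iff its uniform label is `< p`. -/
noncomputable def edgeCfg (adj : V → V → Prop) (p : ℝ) (x : ℝ) : EdgeCfg :=
  fun u v => boolOf (adj u v) && boolOf (edgeU u v x < p)

/-- Connectivity through open edges of the edge configuration `η`. -/
def Conn (η : EdgeCfg) (u v : V) : Prop :=
  Relation.ReflTransGen (fun a b => η a b = true) u v

/-- The `p`-cluster of the vertex `v`: its connected component in the graph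
retaining only open edges. -/
def pCluster (η : EdgeCfg) (v : V) : Set V := {w | Conn η v w}

/-- Canonical representative of the `p`-cluster of `v`: the vertex of the
cluster with minimal encoding. -/
noncomputable def clusterRep (η : EdgeCfg) (v : V) : V :=
  (Encodable.decode (α := V) (sInf (Encodable.encode '' pCluster η v))).getD v

/-- The colour configuration with parameters `p, r` determined by the uniform
sample `x`: every `p`-cluster is coloured black (with probability `r`)
or white, independently of all other `p`-clusters, according to the uniform
label of its canonical representative. -/
noncomputable def colourCfg (adj : V → V → Prop) (p r : ℝ) (x : ℝ) : ColourCfg :=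
  fun v => boolOf (vtxU (clusterRep (edgeCfg adj p x) v) x < r)

/-- The uniform sample: Lebesgue measure on `(0,1]`. -/
noncomputable def base : Measure ℝ := volume.restrict (Set.Ioc 0 1)

/-- `ν_p`: the product Bernoulli(p) measure on edge configurations of the
lattice with adjacency `adj`. -/
noncomputable def edgeMeasure (adj : V → V → Prop) (p : ℝ) : Measure EdgeCfg :=
  base.map (edgeCfg adj p)

/-- `ℙ_{p,r}`: the DaC measure on pairs (edge configuration, colour
configuration) for the lattice with adjacency `adj`. -/
noncomputable def DaCMeasure (adj : V → V → Prop) (p r : ℝ) : Measure Config :=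
  base.map (fun x => (edgeCfg adj p x, colourCfg adj p r x))

/-- Monochromatic connectivity: `u` and `v` are joined by a path (for the
adjacency `adj`) all of whose vertices have colour `c`. -/
def MonoConn (adj : V → V → Prop) (ξ : ColourCfg) (c : Bool) (u v : V) : Prop :=
  Relation.ReflTransGen (fun a b => adj a b ∧ ξ a = c ∧ ξ b = c) u v

/-- The colour-`c` cluster of `v` (for the adjacency `adj`): empty if `v` does
not have colour `c`, and otherwise the maximal `adj`-connected set of
`c`-coloured vertices containing `v`. -/
def monoCluster (adj : V → V → Prop) (ξ : ColourCfg) (c : Bool) (v : V) : Set V :=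
  {w | ξ v = c ∧ MonoConn adj ξ c v w}

/-- The origin. -/
def origin : V := (0, 0)

/-- The size (cardinality) of a set of vertices, with values in `ℝ≥0∞`. -/
noncomputable def sizeE (S : Set V) : ℝ≥0∞ := S.encard

/-- The probability, under the DaC measure with edge adjacency `eadj` and
parameters `p, r`, that the origin lies in an infinite colour-`c` cluster for
the adjacency `cadj`. -/
noncomputable def percProb (eadj cadj : V → V → Prop) (c : Bool) (p r : ℝ) : ℝ≥0∞ :=
  DaCMeasure eadj p r {ω | (monoCluster cadj ω.2 c origin).Infinite}

/-- `Θ(p,r)` for the square lattice: probability that the origin lies in an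
infinite black `r`-cluster. -/
noncomputable def thetaSq (p r : ℝ) : ℝ≥0∞ := percProb SqAdj SqAdj true p r

/-- `Θ*(p,s)` for the square lattice: the `ℙ_{p,1-s}`-probability that the
origin lies in an infinite white `*`-cluster. -/
noncomputable def thetaStarSq (p s : ℝ) : ℝ≥0∞ := percProb SqAdj StarAdj false p (1 - s)

/-- `Θ(p,r)` for the triangular lattice. -/
noncomputable def thetaTri (p r : ℝ) : ℝ≥0∞ := percProb TriAdj TriAdj true p r

/-- The critical colouring density `r_c(p)` of the square lattice DaC model. -/
noncomputable def rcSq (p : ℝ) : ℝ :=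
  sSup {r : ℝ | r ∈ Set.Icc (0 : ℝ) 1 ∧ thetaSq p r = 0}

/-- The critical colouring density `r_c*(p)` for white `*`-percolation. -/
noncomputable def rcStarSq (p : ℝ) : ℝ :=
  sSup {s : ℝ | s ∈ Set.Icc (0 : ℝ) 1 ∧ thetaStarSq p s = 0}

/-- The critical colouring density `r_c(p)` of the triangular lattice DaC model. -/
noncomputable def rcTri (p : ℝ) : ℝ :=
  sSup {r : ℝ | r ∈ Set.Icc (0 : ℝ) 1 ∧ thetaTri p r = 0}

/-! ### Rectangles and crossings -/

/-- The rectangle `S_{n,m} = ([0,n] × [0,m]) ∩ ℤ²`. -/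
def Rect (n m : ℕ) : Set V :=
  {v | 0 ≤ v.1 ∧ v.1 ≤ (n : ℤ) ∧ 0 ≤ v.2 ∧ v.2 ≤ (m : ℤ)}

/-- The top side of `S_{n,m}`. -/
def TopSide (n m : ℕ) : Set V := {v | v ∈ Rect n m ∧ v.2 = (m : ℤ)}

/-- The bottom side of `S_{n,m}`. -/
def BotSide (n m : ℕ) : Set V := {v | v ∈ Rect n m ∧ v.2 = 0}

/-- The left side of `S_{n,m}`. -/
def LeftSide (n m : ℕ) : Set V := {v | v ∈ Rect n m ∧ v.1 = 0}

/-- The right side of `S_{n,m}`. -/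
def RightSide (n m : ℕ) : Set V := {v | v ∈ Rect n m ∧ v.1 = (n : ℤ)}

/-- There is a path (for the adjacency `adj`), all of whose vertices lie in the
region `R` and satisfy the predicate `good`, from the set `A` to the set `B`. -/
def HasCrossing (adj : V → V → Prop) (good : V → Prop) (R A B : Set V) : Prop :=
  ∃ (k : ℕ) (f : Fin (k + 1) → V),
    (∀ i, f i ∈ R ∧ good (f i)) ∧
    (∀ i : Fin k, adj (f i.castSucc) (f i.succ)) ∧
    f 0 ∈ A ∧ f (Fin.last k) ∈ B

/-- `V^b_{n,m}` as a set of colour configurations: there is a black vertical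
crossing of `S_{n,m}` (for the adjacency `adj`). -/
def VertBC (adj : V → V → Prop) (n m : ℕ) : Set ColourCfg :=
  {ξ | HasCrossing adj (fun v => ξ v = true) (Rect n m) (TopSide n m) (BotSide n m)}

/-- `V^{w*}_{n,m}` as a set of colour configurations: there is a white vertical
`*`-crossing of `S_{n,m}`. -/
def VertWStarC (n m : ℕ) : Set ColourCfg :=
  {ξ | HasCrossing StarAdj (fun v => ξ v = false) (Rect n m) (TopSide n m) (BotSide n m)}

/-- `H^{w*}_{n,m}` as a set of colour configurations: there is a white
horizontal `*`-crossing of `S_{n,m}`. -/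
def HorizWStarC (n m : ℕ) : Set ColourCfg :=
  {ξ | HasCrossing StarAdj (fun v => ξ v = false) (Rect n m) (LeftSide n m) (RightSide n m)}

/-- The event (set of full configurations) determined by a set of colour
configurations. -/
def colourEvent (C : Set ColourCfg) : Set Config := {ω | ω.2 ∈ C}

/-! ### Events depending on colours, increasing events, pivotal clusters -/

/-- The event `A` is defined in terms of the colours of the vertices in `W`. -/
def DependsOnColoursIn (A : Set Config) (W : Set V) : Prop :=
  ∀ ω ω' : Config, (∀ v ∈ W, ω.2 v = ω'.2 v) → (ω ∈ A ↔ ω' ∈ A)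

/-- The event `A` is increasing (for the partial order comparing colour
configurations pointwise, black = `true` above white = `false`). -/
def IncreasingColourEvent (A : Set Config) : Prop :=
  ∀ ω ω' : Config, (∀ v : V, ω.2 v = true → ω'.2 v = true) → ω ∈ A → ω' ∈ A

/-- Flip the colours of the vertices of `C`. -/
noncomputable def flipOn (C : Set V) (ξ : ColourCfg) : ColourCfg :=
  fun v => @ite _ (v ∈ C) (Classical.propDecidable _) (!ξ v) (ξ v)

/-- The set `C` is a pivotal `p`-cluster for the event `A` in the
configuration `ω`: `C` is a `p`-cluster of the edge configuration of `ω`, and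
flipping the colour of (all the vertices of) `C` changes whether the
configuration belongs to `A`. -/
def IsPivotal (A : Set Config) (ω : Config) (C : Set V) : Prop :=
  (∃ v : V, C = pCluster ω.1 v) ∧ ¬ (ω ∈ A ↔ (ω.1, flipOn C ω.2) ∈ A)

/-- `n(A)`: the number of pivotal `p`-clusters for the event `A`, with values
in `ℝ≥0∞`. -/
noncomputable def numPivotal (A : Set Config) (ω : Config) : ℝ≥0∞ :=
  {C : Set V | IsPivotal A ω C}.encard

/-! ### Barriers -/

/-- Connectivity in the square lattice avoiding the edges of `E`. -/
def AvoidConn (E : Set (V × V)) (u v : V) : Prop :=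
  Relation.ReflTransGen (fun a b => SqAdj a b ∧ (a, b) ∉ E ∧ (b, a) ∉ E) u v

/-- `E` is a barrier: a set of edges of the square lattice whose removal
(keeping the end-vertices) separates `ℤ²` into two or more connected
components, exactly one of which is infinite. -/
def IsBarrier (E : Set (V × V)) : Prop :=
  (∀ e ∈ E, SqAdj e.1 e.2) ∧
  (∃ v, {w | AvoidConn E v w}.Infinite) ∧
  (∀ v w, {x | AvoidConn E v x}.Infinite → {x | AvoidConn E w x}.Infinite → AvoidConn E v w) ∧
  (∃ v, {w | AvoidConn E v w}.Finite)

/-- The exterior of a barrier: its unique infinite complementary component. -/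
def barrierExt (E : Set (V × V)) : Set V := {v | {w | AvoidConn E v w}.Infinite}

/-- The interior of a barrier: the union of the finite complementary components. -/
def barrierInt (E : Set (V × V)) : Set V := {v | {w | AvoidConn E v w}.Finite}

/-- The event `A ⊆ EdgeCfg` is increasing (opening edges preserves it). -/
def IncreasingEdgeEvent (A : Set EdgeCfg) : Prop :=
  ∀ η η' : EdgeCfg, (∀ a b : V, η a b = true → η' a b = true) → η ∈ A → η' ∈ A

/-- The event `A ⊆ EdgeCfg` depends only on the states of the edges both of
whose endpoints lie in `W`. -/
def DependsOnEdgesIn (A : Set EdgeCfg) (W : Set V) : Prop :=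
  ∀ η η' : EdgeCfg, (∀ a b : V, a ∈ W → b ∈ W → η a b = η' a b) → (η ∈ A ↔ η' ∈ A)

/-! ### Translations -/

/-- Translation of configurations by the vector `u`. -/
def shift (u : V) (ω : Config) : Config :=
  (fun a b => ω.1 (a + u) (b + u), fun a => ω.2 (a + u))

end DaC

/-!
Condition on the edge configuration `η`. Every cluster is coloured by the independent label of its
representative, so the conditional probability of `A` is the probability, under a product Bernoulli
measure, of an increasing event in finitely many labels. For such a product measure Russo's formula
follows by resampling the sites one at a time: conditioning on the site `v` makes the probability an
affine function of the parameter at `v`, with slope the probability that `v` is pivotal. A label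
that is not attached to a representative influences no colour, hence pivotal labels correspond
exactly to pivotal clusters. Since at most `|W|` labels can be pivotal, dominated convergence allows
differentiation under the expectation over `η`.

In the coding of the model by a single uniform variable, the required independence comes from its
binary digits, which are independent fair coins because doubling modulo one maps each half of the
unit interval onto the whole interval.
-/

namespace DaC

open Function Set Encodable ProbabilityTheory unitInterval

/-! ### Binary digits of a uniform variable -/

section Digits

open Real

lemma boolOf_eq_true {P : Prop} : boolOf P = true ↔ P := by simp [boolOf]

lemma measurable_boolOf {α : Type*} [MeasurableSpace α] {P : α → Prop}
    (hP : MeasurableSet {a | P a}) : Measurable (fun a ↦ boolOf (P a)) :=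
  measurable_to_bool (by simpa only [preimage, mem_singleton_iff, boolOf_eq_true] using hP)

@[fun_prop]
lemma measurable_bit (n : ℕ) : Measurable (bit n) := by
  have hfloor : Measurable fun x : ℝ ↦ ⌊x * 2 ^ (n + 1)⌋ := by fun_prop
  exact measurable_boolOf (hfloor (MeasurableSet.of_discrete (s := {k : ℤ | k % 2 = 1})))

lemma bit_add_one (n : ℕ) (x : ℝ) : bit n (x + 1) = bit n x := by
  have hfloor : ⌊(x + 1) * 2 ^ (n + 1)⌋ = ⌊x * 2 ^ (n + 1)⌋ + 2 ^ n * 2 := by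
    rw [← Int.floor_add_intCast]
    push_cast
    ring_nf
  rw [bit, bit, hfloor, Int.add_mul_emod_self_right]

lemma bit_succ (n : ℕ) (x : ℝ) : bit (n + 1) x = bit n (x * 2) := by
  rw [bit, bit, pow_succ' 2 (n + 1), mul_assoc]

lemma bit_zero_eq_iff {x : ℝ} (hx : x ∈ Ico (0 : ℝ) 1) (b : Bool) :
    bit 0 x = b ↔ x * 2 ∈ Ico (b.toNat : ℝ) (b.toNat + 1) := by
  have hbit : bit 0 x = true ↔ 1 ≤ x * 2 := by
    have hfloor : ⌊x * 2⌋ < 2 := Int.floor_lt.2 (by norm_num; linarith [hx.2])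
    have hfloor' : 0 ≤ ⌊x * 2⌋ := Int.floor_nonneg.2 (by linarith [hx.1])
    have hone : 1 ≤ ⌊x * 2⌋ ↔ 1 ≤ x * 2 := by simpa using Int.le_floor (z := 1) (a := x * 2)
    rw [bit, boolOf_eq_true, zero_add, pow_one, ← hone]
    lia
  cases b
  · rw [Bool.eq_false_iff, ne_eq, hbit]
    simpa using fun _ ↦ hx.1
  · rw [hbit]
    norm_num
    intro
    linarith [hx.2]

instance : IsProbabilityMeasure base := ⟨by simp [base]⟩

lemma base_eq_restrict_Ico : base = volume.restrict (Ico 0 1) :=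
  Measure.restrict_congr_set Ico_ae_eq_Ioc.symm

lemma base_apply {S : Set ℝ} (hS : MeasurableSet S) : base S = volume (S ∩ Ico 0 1) := by
  rw [base_eq_restrict_Ico, Measure.restrict_apply hS]

lemma base_apply_eq_volume_inter_Ico_add {S : Set ℝ} (hS : MeasurableSet S)
    (hper : ∀ x, x + 1 ∈ S ↔ x ∈ S) (n : ℕ) : base S = volume (S ∩ Ico (n : ℝ) (n + 1)) := by
  induction n with
  | zero => simpa using base_apply hS
  | succ n ih =>
    rw [ih, ← measure_preimage_add_right volume (1 : ℝ) (S ∩ Ico ((n + 1 : ℕ) : ℝ) _)]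
    congr 1
    ext x
    simp [hper]

/-- The law of a single binary digit of a uniform variable, i.e. the fair coin. -/
noncomputable def coin : Measure Bool := base.map (bit 0)

instance : IsProbabilityMeasure coin :=
  Measure.isProbabilityMeasure_map (measurable_bit 0).aemeasurable

lemma base_bit_zero_eq_inter_double {S : Set ℝ} (hS : MeasurableSet S)
    (hper : ∀ x, x + 1 ∈ S ↔ x ∈ S) (b : Bool) :
    base (bit 0 ⁻¹' {b} ∩ (· * 2) ⁻¹' S) = 2⁻¹ * base S := by
  have hdouble : bit 0 ⁻¹' {b} ∩ (· * 2) ⁻¹' S ∩ Ico (0 : ℝ) 1 =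
      (· * 2) ⁻¹' (S ∩ Ico (b.toNat : ℝ) (b.toNat + 1)) := by
    ext x
    constructor
    · rintro ⟨⟨hb, hxS⟩, hx⟩
      exact ⟨hxS, (bit_zero_eq_iff hx b).1 hb⟩
    · rintro ⟨hxS, hxb⟩
      have hx : x ∈ Ico (0 : ℝ) 1 := by
        cases b <;> norm_num at hxb ⊢ <;> constructor <;> linarith [hxb.1, hxb.2]
      exact ⟨⟨(bit_zero_eq_iff hx b).2 hxb, hxS⟩, hx⟩
  rw [base_apply ((measurable_bit 0 (measurableSet_singleton b)).inter
      (measurable_mul_const 2 hS)), hdouble,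
    Real.volume_preimage_mul_right two_ne_zero, ← base_apply_eq_volume_inter_Ico_add hS hper]
  simp [ENNReal.ofReal_inv_of_pos]

lemma base_bit_zero_mem_inter_double {S : Set ℝ} (hS : MeasurableSet S)
    (hper : ∀ x, x + 1 ∈ S ↔ x ∈ S) (B : Set Bool) :
    base (bit 0 ⁻¹' B ∩ (· * 2) ⁻¹' S) = coin B * base S := by
  have hcoin (b : Bool) : coin {b} = 2⁻¹ := by
    simpa [coin, Measure.map_apply (measurable_bit 0)] using
      base_bit_zero_eq_inter_double .univ (by simp) b
  have hlaw : (base.restrict ((· * 2) ⁻¹' S)).map (bit 0) = base S • coin := by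
    refine Measure.ext_of_singleton fun b ↦ ?_
    rw [Measure.map_apply (measurable_bit 0) (measurableSet_singleton b),
      Measure.restrict_apply (measurable_bit 0 (measurableSet_singleton b)),
      base_bit_zero_eq_inter_double hS hper, Measure.smul_apply, hcoin, smul_eq_mul, mul_comm]
  rw [← Measure.restrict_apply (measurable_bit 0 .of_discrete),
    ← Measure.map_apply (measurable_bit 0) .of_discrete, hlaw, Measure.smul_apply, smul_eq_mul,
    mul_comm]

lemma base_forall_bit_mem (n : ℕ) (t : ℕ → Set Bool) :
    base {x | ∀ i < n, bit i x ∈ t i} = ∏ i ∈ Finset.range n, coin (t i) := by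
  induction n generalizing t with
  | zero => simp
  | succ n ih =>
    have hmeas : MeasurableSet {x | ∀ i < n, bit i x ∈ t (i + 1)} := by
      simp only [ofPred_forall]
      exact .iInter fun i ↦ .iInter fun _ ↦ measurable_bit i .of_discrete
    rw [Finset.prod_range_succ', ← ih fun i ↦ t (i + 1), mul_comm,
      ← base_bit_zero_mem_inter_double hmeas (by simp [bit_add_one])]
    congr 1
    ext x
    simp only [mem_ofPred_eq, Nat.forall_lt_succ_left, bit_succ, mem_inter_iff, mem_preimage]

lemma map_bit_base : base.map (fun x n ↦ bit n x) = Measure.infinitePi fun _ : ℕ ↦ coin := by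
  classical
  refine Measure.eq_infinitePi _ fun s t ht ↦ ?_
  obtain ⟨n, hn⟩ := s.exists_nat_subset_range
  have hcyl : (fun x n ↦ bit n x) ⁻¹' (s : Set ℕ).pi t =
      {x | ∀ i < n, bit i x ∈ if i ∈ s then t i else univ} := by
    ext x
    have := fun i (hi : i ∈ s) ↦ Finset.mem_range.1 (hn hi)
    simp only [mem_preimage, mem_pi, Finset.mem_coe, mem_ofPred_eq]
    grind
  rw [Measure.map_apply (measurable_pi_iff.2 measurable_bit) (.pi s.countable_toSet fun i _ ↦ ht i),
    hcyl, base_forall_bit_mem, ← Finset.prod_subset hn fun i _ hi ↦ by rw [if_neg hi, measure_univ]]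
  exact Finset.prod_congr rfl fun i hi ↦ by simp [hi]

/-- The number with binary expansion `0.b₀b₁b₂…`. -/
noncomputable def ofBits (b : ℕ → Bool) : ℝ := ofDigits fun k ↦ if b k then (1 : Fin 2) else 0

@[fun_prop]
lemma measurable_ofBits : Measurable ofBits :=
  continuous_ofDigits.measurable.comp <| measurable_pi_iff.2 fun k ↦
    (Measurable.of_discrete (f := fun c : Bool ↦ if c then (1 : Fin 2) else 0)).comp
      (measurable_pi_apply k)

lemma ofBits_bit {x : ℝ} (hx : x ∈ Ico (0 : ℝ) 1) : ofBits (fun n ↦ bit n x) = x := by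
  have hdigits : (fun n ↦ if bit n x then (1 : Fin 2) else 0) = digits x 2 := by
    ext n
    have hfloor : (⌊x * 2 ^ (n + 1)⌋₊ : ℤ) = ⌊x * 2 ^ (n + 1)⌋ :=
      Int.natCast_floor_eq_floor (mul_nonneg hx.1 (by positivity))
    simp only [bit, boolOf_eq_true, ← hfloor, digits, Nat.cast_ofNat, Fin.val_ofNat]
    split_ifs <;> simp <;> lia
  rw [ofBits, hdigits, ofDigits_digits one_lt_two hx]

lemma unif_eq_ofBits (i : ℕ) (x : ℝ) : unif i x = ofBits fun k ↦ bit (Nat.pair i k) x := by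
  refine tsum_congr fun k ↦ ?_
  split_ifs <;> simp [ofDigitsTerm, *]

@[fun_prop]
lemma measurable_unif (i : ℕ) : Measurable (unif i) := by
  simp only [funext (unif_eq_ofBits i)]
  exact measurable_ofBits.comp (measurable_pi_iff.2 fun k ↦ measurable_bit _)

lemma map_ofBits_infinitePi_coin : (Measure.infinitePi fun _ : ℕ ↦ coin).map ofBits = base := by
  have hid : (ofBits ∘ fun x n ↦ bit n x) =ᵐ[base] id := by
    rw [base_eq_restrict_Ico]
    filter_upwards [ae_restrict_mem measurableSet_Ico] with x hx
    exact ofBits_bit hx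
  rw [← map_bit_base, Measure.map_map measurable_ofBits (measurable_pi_iff.2 measurable_bit),
    Measure.map_congr hid, Measure.map_id]

lemma map_unif_base : base.map (fun x i ↦ unif i x) = Measure.infinitePi fun _ : ℕ ↦ base := by
  have hpair := Measure.map_infinitePi_infinitePi_of_inj (P := fun _ : ℕ ↦ coin)
    (f := fun q : ℕ × ℕ ↦ Nat.pair q.1 q.2) Nat.pairEquiv.injective
  have hrows := Measure.infinitePi_map_pi
    (fun _ : ℕ ↦ Measure.infinitePi fun _ : ℕ ↦ coin) fun _ ↦ measurable_ofBits
  simp only [map_ofBits_infinitePi_coin] at hrows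
  rw [← hrows, ← Measure.infinitePi_map_curry, ← hpair, ← map_bit_base,
    Measure.map_map (by fun_prop) (measurable_pi_iff.2 measurable_bit),
    Measure.map_map (by fun_prop) (by fun_prop), Measure.map_map (by fun_prop) (by fun_prop)]
  simp only [unif_eq_ofBits]
  rfl

end Digits

section Independence

variable {ι κ X : Type*} [MeasurableSpace X]

lemma measurable_sumElim : Measurable fun x : (ι → X) × (κ → X) ↦ Sum.elim x.1 x.2 :=
  (MeasurableEquiv.sumPiEquivProdPi fun _ : ι ⊕ κ ↦ X).symm.measurable

variable (μ : Measure X) [IsProbabilityMeasure μ]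

lemma map_sumElim_infinitePi_prod :
    ((Measure.infinitePi fun _ : ι ↦ μ).prod (Measure.infinitePi fun _ : κ ↦ μ)).map
      (fun x ↦ Sum.elim x.1 x.2) = Measure.infinitePi fun _ : ι ⊕ κ ↦ μ := by
  refine Measure.eq_infinitePi _ fun s t ht ↦ ?_
  have hbox : (fun x : (ι → X) × (κ → X) ↦ Sum.elim x.1 x.2) ⁻¹' (s : Set (ι ⊕ κ)).pi t =
      (s.toLeft : Set ι).pi (t ∘ Sum.inl) ×ˢ (s.toRight : Set κ).pi (t ∘ Sum.inr) := by
    ext x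
    simp [mem_pi]
  rw [Measure.map_apply measurable_sumElim (.pi s.countable_toSet fun i _ ↦ ht i), hbox,
    Measure.prod_prod, Measure.infinitePi_pi _ (by simp [ht]),
    Measure.infinitePi_pi _ (by simp [ht]), Finset.prod_sum_eq_prod_toLeft_mul_prod_toRight]
  rfl

lemma map_infinitePi_of_disjoint {α : Type*} {f : ι → α} {g : κ → α} (hf : Injective f)
    (hg : Injective g) (hfg : ∀ i k, f i ≠ g k) :
    (Measure.infinitePi fun _ : α ↦ μ).map (fun x ↦ (fun i ↦ x (f i), fun k ↦ x (g k))) =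
      (Measure.infinitePi fun _ : ι ↦ μ).prod (Measure.infinitePi fun _ : κ ↦ μ) := by
  have hreindex := Measure.map_infinitePi_infinitePi_of_inj (P := fun _ : α ↦ μ)
    (hf.sumElim hg hfg)
  have hproj : Measurable fun y : ι ⊕ κ → X ↦ (fun i ↦ y (.inl i), fun k ↦ y (.inr k)) := by
    fun_prop
  calc _ = ((Measure.infinitePi fun _ : α ↦ μ).map fun x i ↦ x (Sum.elim f g i)).map
        fun y ↦ (fun i ↦ y (.inl i), fun k ↦ y (.inr k)) := by
        rw [Measure.map_map hproj (by fun_prop)]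
        rfl
    _ = _ := by
        rw [hreindex, ← map_sumElim_infinitePi_prod, Measure.map_map hproj measurable_sumElim]
        exact Measure.map_id

end Independence

/-! ### Russo's formula for independent sites -/

section Resampling

variable {ι : Type*} [DecidableEq ι] {X : ι → Type*} [∀ i, MeasurableSpace (X i)]
  (μ : ∀ i, Measure (X i)) [∀ i, IsProbabilityMeasure (μ i)]

lemma measurable_update_prod (v : ι) :
    Measurable fun x : X v × (∀ i, X i) ↦ update x.2 v x.1 := by
  refine measurable_pi_iff.2 fun i ↦ ?_
  obtain rfl | hi := eq_or_ne i v
  · simpa using measurable_fst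
  · simp only [update_of_ne hi]
    fun_prop

lemma map_update_prod_infinitePi (v : ι) :
    ((μ v).prod (Measure.infinitePi μ)).map (fun x ↦ update x.2 v x.1) =
      Measure.infinitePi μ := by
  refine Measure.eq_infinitePi _ fun s t ht ↦ ?_
  have hbox : (fun x : X v × (∀ i, X i) ↦ update x.2 v x.1) ⁻¹' (s : Set ι).pi t =
      {b | v ∈ s → b ∈ t v} ×ˢ ((s : Set ι) \ {v}).pi t := by
    ext x
    simp only [mem_preimage, Set.mem_pi, Finset.mem_coe, mem_prod, mem_ofPred_eq,
      Set.mem_sdiff, mem_singleton_iff]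
    grind
  rw [Measure.map_apply (measurable_update_prod v) (.pi s.countable_toSet fun i _ ↦ ht i), hbox,
    Measure.prod_prod, ← Finset.coe_erase, Measure.infinitePi_pi _ fun i _ ↦ ht i]
  by_cases hv : v ∈ s
  · simp [hv, Finset.mul_prod_erase s (fun i ↦ μ i (t i))]
  · simp [hv]

end Resampling

section SiteMeasure

variable (ι : Type*) {r : ℝ}

/-- Independent site percolation on `ι`: each site is `true` with probability `r`. The parameter is
clipped to `[0, 1]` so that the measure is defined for every real `r`. -/
noncomputable def siteMeasure (r : ℝ) : Measure (ι → Bool) :=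
  Measure.infinitePi fun _ ↦ bernoulliMeasure true false (projIcc 0 1 zero_le_one r)

instance (r : ℝ) : IsProbabilityMeasure (siteMeasure ι r) := by
  unfold siteMeasure
  infer_instance

lemma map_boolOf_lt_base (r : ℝ) :
    base.map (fun x ↦ boolOf (x < r)) =
      bernoulliMeasure true false (projIcc 0 1 zero_le_one r) := by
  have hmeas : Measurable fun x : ℝ ↦ boolOf (x < r) := measurable_boolOf measurableSet_Iio
  have := Measure.isProbabilityMeasure_map (μ := base) hmeas.aemeasurable
  have htrue : base.map (fun x ↦ boolOf (x < r)) {true} =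
      bernoulliMeasure true false (projIcc 0 1 zero_le_one r) {true} := by
    have hpre : (fun x ↦ boolOf (x < r)) ⁻¹' {true} ∩ Ico 0 1 = Ico 0 (min r 1) := by
      ext x
      simp only [mem_inter_iff, mem_preimage, mem_singleton_iff, boolOf_eq_true, mem_Ico,
        lt_min_iff]
      tauto
    rw [Measure.map_apply hmeas (measurableSet_singleton true),
      base_apply (hmeas (measurableSet_singleton true)), hpre, Real.volume_Ico,
      bernoulliMeasure_apply_of_mem_of_notMem _ (measurableSet_singleton true) rfl (by simp)]
    rw [ENNReal.ofReal]
    congr 1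
    ext
    simp [coe_projIcc, min_comm, max_comm]
  refine Measure.ext_of_singleton (Bool.rec ?_ htrue)
  have hcompl : {false} = ({true} : Set Bool)ᶜ := by ext b; simp
  rw [hcompl, prob_compl_eq_one_sub (measurableSet_singleton true), htrue,
    prob_compl_eq_one_sub (measurableSet_singleton true)]

lemma map_boolOf_lt_infinitePi_base (r : ℝ) :
    (Measure.infinitePi fun _ : ι ↦ base).map (fun u i ↦ boolOf (u i < r)) = siteMeasure ι r := by
  rw [Measure.infinitePi_map_pi (fun _ : ι ↦ base) (f := fun _ x ↦ boolOf (x < r))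
    fun _ ↦ measurable_boolOf measurableSet_Iio]
  simp only [map_boolOf_lt_base, siteMeasure]

variable {ι} [DecidableEq ι] {B : Set (ι → Bool)}

lemma measurable_update_const (v : ι) (b : Bool) : Measurable fun z : ι → Bool ↦ update z v b :=
  (measurable_update_prod v).comp measurable_prodMk_left

lemma siteMeasure_real_eq (hr : r ∈ Icc (0 : ℝ) 1) (hB : MeasurableSet B) (v : ι) :
    (siteMeasure ι r).real B = r * (siteMeasure ι r).real {z | update z v true ∈ B} +
      (1 - r) * (siteMeasure ι r).real {z | update z v false ∈ B} := by
  have hupdate : Measurable fun x : Bool × (ι → Bool) ↦ update x.2 v x.1 :=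
    measurable_update_prod v
  have hmeas (b : Bool) : Measurable fun z : ι → Bool ↦ update z v b := measurable_update_const v b
  have hresample : siteMeasure ι r =
      ((bernoulliMeasure true false ⟨r, hr⟩).prod (siteMeasure ι r)).map
        fun x ↦ update x.2 v x.1 := by
    rw [siteMeasure, projIcc_of_mem zero_le_one hr]
    exact (map_update_prod_infinitePi (fun _ : ι ↦ bernoulliMeasure true false ⟨r, hr⟩) v).symm
  have hmix : siteMeasure ι r =
      toNNReal ⟨r, hr⟩ • (siteMeasure ι r).map (update · v true) +
        toNNReal (σ ⟨r, hr⟩) • (siteMeasure ι r).map (update · v false) := by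
    nth_rw 1 [hresample]
    rw [bernoulliMeasure_def, Measure.add_prod, Measure.prod_smul_left, Measure.prod_smul_left,
      Measure.dirac_prod, Measure.dirac_prod, Measure.map_add _ _ hupdate,
      Measure.map_smul, Measure.map_smul, Measure.map_map hupdate (by fun_prop),
      Measure.map_map hupdate (by fun_prop)]
    rfl
  nth_rw 1 [hmix]
  rw [measureReal_add_apply, measureReal_nnreal_smul_apply, measureReal_nnreal_smul_apply,
    map_measureReal_apply (hmeas _) hB, map_measureReal_apply (hmeas _) hB]
  rfl

end SiteMeasure

section DependsOn

variable {ι : Type*} {X : ι → Type*} [∀ i, MeasurableSpace (X i)] [∀ i, Countable (X i)]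
  [∀ i, MeasurableSingletonClass (X i)] {s : Set ι}

lemma measurableSet_of_dependsOn {B : Set (∀ i, X i)} (hs : s.Finite)
    (hB : DependsOn (· ∈ B) s) : MeasurableSet B := by
  have := hs.to_subtype
  obtain ⟨g, hg⟩ := dependsOn_iff_exists_comp.1 hB
  have hpre : B = s.domRestrict ⁻¹' {y | g y} := by
    ext x
    exact iff_of_eq (congrFun hg x)
  rw [hpre]
  exact (measurable_pi_iff.2 fun i ↦ measurable_pi_apply _) .of_discrete

end DependsOn

section Russo

variable {ι : Type*} [DecidableEq ι] {B : Set (ι → Bool)} {r : ℝ}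

lemma dependsOn_update {v : ι} {R : Set ι} (hB : DependsOn (· ∈ B) (insert v R)) (b : Bool) :
    DependsOn (· ∈ {z | update z v b ∈ B}) R := fun x y hxy ↦ hB fun i hi ↦ by
  obtain rfl | hiv := eq_or_ne i v
  · simp
  · simp [hiv, hxy i (hi.resolve_left hiv)]

/-- The influence of the site `v` on the event `B`: the change in the probability of `B` caused by
switching `v` from `false` to `true`. -/
noncomputable def influence (B : Set (ι → Bool)) (r : ℝ) (v : ι) : ℝ :=
  (siteMeasure ι r).real {z | update z v true ∈ B} -
    (siteMeasure ι r).real {z | update z v false ∈ B}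

lemma influence_eq_of_ne (hr : r ∈ Icc (0 : ℝ) 1) (hB : MeasurableSet B) {u v : ι} (huv : u ≠ v) :
    influence B r u = r * influence {z | update z v true ∈ B} r u +
      (1 - r) * influence {z | update z v false ∈ B} r u := by
  have hcond (c : Bool) := siteMeasure_real_eq hr (measurable_update_const u c hB) v
  simp only [preimage] at hcond
  simp only [influence, hcond, mem_ofPred_eq, update_comm huv]
  ring

theorem hasDerivAt_siteMeasure_real {R : Finset ι} (hB : DependsOn (· ∈ B) (R : Set ι))
    (hr : r ∈ Ioo (0 : ℝ) 1) :
    HasDerivAt (fun s ↦ (siteMeasure ι s).real B) (∑ v ∈ R, influence B r v) r := by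
  induction R using Finset.induction generalizing B with
  | empty =>
    obtain rfl | rfl : B = ∅ ∨ B = univ := by
      rw [← not_nonempty_iff_eq_empty, ← imp_iff_not_or, eq_univ_iff_forall]
      rintro ⟨x, hx⟩ y
      exact (hB (by simp)).mp hx
    all_goals simpa using hasDerivAt_const r _
  | insert v R hv ih =>
    rw [Finset.coe_insert] at hB
    have hmeas : MeasurableSet B := measurableSet_of_dependsOn (R.finite_toSet.insert v) hB
    have hcond : (fun s ↦ (siteMeasure ι s).real B) =ᶠ[nhds r] fun s ↦
        s * (siteMeasure ι s).real {z | update z v true ∈ B} +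
          (1 - s) * (siteMeasure ι s).real {z | update z v false ∈ B} := by
      filter_upwards [Ioo_mem_nhds hr.1 hr.2] with s hs
      exact siteMeasure_real_eq (Ioo_subset_Icc_self hs) hmeas v
    have hsum : ∑ u ∈ R, influence B r u =
        r * ∑ u ∈ R, influence {z | update z v true ∈ B} r u +
          (1 - r) * ∑ u ∈ R, influence {z | update z v false ∈ B} r u := by
      rw [Finset.mul_sum, Finset.mul_sum, ← Finset.sum_add_distrib]
      exact Finset.sum_congr rfl fun u hu ↦
        influence_eq_of_ne (Ioo_subset_Icc_self hr) hmeas (ne_of_mem_of_not_mem hu hv)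
    refine HasDerivAt.congr_of_eventuallyEq ?_ hcond
    refine (((hasDerivAt_id r).mul (ih (dependsOn_update hB true))).add
      (((hasDerivAt_id r).const_sub 1).mul (ih (dependsOn_update hB false)))).congr_deriv ?_
    rw [Finset.sum_insert hv, hsum, influence, id]
    ring

/-- The site `v` is pivotal for the event `B` in the configuration `z`: flipping `v` changes whether
`B` occurs. -/
def IsPivotalSite (B : Set (ι → Bool)) (z : ι → Bool) (v : ι) : Prop :=
  ¬(z ∈ B ↔ update z v (!z v) ∈ B)

lemma isPivotalSite_iff {z : ι → Bool} {v : ι} :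
    IsPivotalSite B z v ↔ ¬(update z v true ∈ B ↔ update z v false ∈ B) := by
  have hz : update z v (z v) = z := update_eq_self v z
  cases hzv : z v <;> simp only [hzv] at hz <;> simp [IsPivotalSite, hz, hzv, Iff.comm]

lemma not_isPivotalSite_of_dependsOn {R : Set ι} (hB : DependsOn (· ∈ B) R) {z : ι → Bool} {v : ι}
    (hv : v ∉ R) : ¬IsPivotalSite B z v := by
  rw [IsPivotalSite, not_not]
  exact iff_of_eq (hB fun i hi ↦ (update_of_ne (ne_of_mem_of_not_mem hi hv) _ _).symm)

lemma measurableSet_isPivotalSite (hB : MeasurableSet B) (v : ι) :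
    MeasurableSet {z | IsPivotalSite B z v} := by
  simp only [isPivotalSite_iff]
  exact ((measurable_update_const v true hB).iff (measurable_update_const v false hB)).compl

lemma influence_eq_measureReal_isPivotalSite (hB : MeasurableSet B) (hup : IsUpperSet B) (v : ι) :
    influence B r v = (siteMeasure ι r).real {z | IsPivotalSite B z v} := by
  have hmono (z : ι → Bool) (h : update z v false ∈ B) : update z v true ∈ B :=
    hup (update_le_update_iff'.2 (Bool.false_le _)) h
  have hdiff : {z | IsPivotalSite B z v} =
      {z | update z v true ∈ B} \ {z | update z v false ∈ B} := by
    ext z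
    have := hmono z
    simp only [isPivotalSite_iff, mem_ofPred_eq, Set.mem_sdiff]
    tauto
  exact (hdiff ▸ measureReal_sdiff hmono (measurable_update_const v false hB)).symm

/-- The number of sites that are pivotal for `B` in the configuration `z`. -/
noncomputable def numPivotalSites (B : Set (ι → Bool)) (z : ι → Bool) : ℝ≥0∞ :=
  ({v | IsPivotalSite B z v}.encard : ℝ≥0∞)

lemma numPivotalSites_le {R : Set ι} (hB : DependsOn (· ∈ B) R) (z : ι → Bool) :
    numPivotalSites B z ≤ R.encard := by
  have hsub : {v | IsPivotalSite B z v} ⊆ R := fun v hv ↦ by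
    by_contra hvR
    exact not_isPivotalSite_of_dependsOn hB hvR hv
  exact ENat.toENNReal_le.2 (encard_le_encard hsub)

end Russo

section Encard

variable {ι α : Type*} {S : α → Set ι}

lemma encard_eq_tsum_indicator (a : α) :
    ((S a).encard : ℝ≥0∞) = ∑' i, {a | i ∈ S a}.indicator 1 a := by
  rw [← ENNReal.tsum_set_one, tsum_subtype (S a) (fun _ ↦ (1 : ℝ≥0∞))]
  rfl

variable [Countable ι] [MeasurableSpace α]

lemma measurable_encard (hS : ∀ i, MeasurableSet {a | i ∈ S a}) :
    Measurable fun a ↦ ((S a).encard : ℝ≥0∞) := by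
  simp only [encard_eq_tsum_indicator]
  exact Measurable.tsum fun i ↦ measurable_one.indicator (hS i)

lemma lintegral_encard (hS : ∀ i, MeasurableSet {a | i ∈ S a}) (μ : Measure α) :
    ∫⁻ a, (S a).encard ∂μ = ∑' i, μ {a | i ∈ S a} := by
  simp only [encard_eq_tsum_indicator]
  rw [lintegral_tsum fun i ↦ (measurable_one.indicator (hS i)).aemeasurable]
  simp only [lintegral_indicator_one (hS _)]

end Encard

theorem hasDerivAt_siteMeasure_real_of_isUpperSet {ι : Type*} [DecidableEq ι] [Countable ι]
    {B : Set (ι → Bool)} {R : Set ι} (hR : R.Finite) (hB : DependsOn (· ∈ B) R)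
    (hup : IsUpperSet B) {r : ℝ} (hr : r ∈ Ioo (0 : ℝ) 1) :
    HasDerivAt (fun s ↦ (siteMeasure ι s).real B)
      (∫⁻ z, numPivotalSites B z ∂siteMeasure ι r).toReal r := by
  lift R to Finset ι using hR
  have hmeas : MeasurableSet B := measurableSet_of_dependsOn R.finite_toSet hB
  have hnot (v : ι) (hv : v ∉ R) : siteMeasure ι r {z | IsPivotalSite B z v} = 0 := by
    simp [not_isPivotalSite_of_dependsOn hB (mt Finset.mem_coe.1 hv)]
  have hsum : (∫⁻ z, numPivotalSites B z ∂siteMeasure ι r).toReal = ∑ v ∈ R, influence B r v := by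
    have htsum : ∫⁻ z, numPivotalSites B z ∂siteMeasure ι r =
        ∑' v, siteMeasure ι r {z | IsPivotalSite B z v} :=
      lintegral_encard (measurableSet_isPivotalSite hmeas) _
    rw [htsum, tsum_eq_sum hnot,
      ENNReal.toReal_sum fun v _ ↦ measure_ne_top _ _]
    exact Finset.sum_congr rfl fun v _ ↦
      (influence_eq_measureReal_isPivotalSite hmeas hup v).symm
  exact hsum ▸ hasDerivAt_siteMeasure_real hB hr

/-! ### Clusters and their labels -/

section Cluster

variable {η : EdgeCfg} {u v w : V}

lemma clusterRep_eq_iff :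
    clusterRep η v = w ↔ Conn η v w ∧ ∀ u, Conn η v u → encode w ≤ encode u := by
  have hspec : Conn η v (clusterRep η v) ∧
      ∀ u, Conn η v u → encode (clusterRep η v) ≤ encode u := by
    obtain ⟨w, hw, hwe⟩ := Nat.sInf_mem (s := encode '' pCluster η v) ⟨_, v, .refl, rfl⟩
    have hrep : clusterRep η v = w := by rw [clusterRep, ← hwe, encodek, Option.getD_some]
    exact hrep ▸ ⟨hw, fun u hu ↦ hwe ▸ Nat.sInf_le ⟨u, hu, rfl⟩⟩
  constructor
  · rintro rfl
    exact hspec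
  · rintro ⟨hw, hmin⟩
    exact encode_injective (le_antisymm (hspec.2 w hw) (hmin _ hspec.1))

lemma conn_clusterRep : Conn η v (clusterRep η v) := (clusterRep_eq_iff.1 rfl).1

lemma isOpen_conn (u v : V) : IsOpen {η : EdgeCfg | Conn η u v} := by
  refine isOpen_iff_mem_nhds.2 fun η h ↦ ?_
  induction h with
  | refl => exact Filter.Eventually.of_forall fun η' ↦ .refl
  | @tail a b _ hab ih =>
    have hopen : IsOpen {η' : EdgeCfg | η' a b = true} :=
      (isOpen_discrete {true}).preimage (by fun_prop : Continuous fun η' : EdgeCfg ↦ η' a b)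
    filter_upwards [ih, hopen.mem_nhds hab] with η' hconn hstep
    exact hconn.tail hstep

lemma measurable_clusterRep (v : V) : Measurable fun η ↦ clusterRep η v := by
  have hconn (w : V) : MeasurableSet {η : EdgeCfg | Conn η v w} := (isOpen_conn v w).measurableSet
  refine measurable_to_countable' fun w ↦ ?_
  simp only [preimage, mem_singleton_iff, clusterRep_eq_iff]
  simp only [ofPred_and, ofPred_forall]
  exact (hconn w).inter (.iInter fun u ↦ (hconn u).imp (.const _))

/-- Edge configurations giving the two orientations of an edge the same state. The type `EdgeCfg`
does not enforce this, and only for such configurations are `p`-clusters equivalence classes. -/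
def IsUndirected (η : EdgeCfg) : Prop := ∀ u v, η u v = η v u

lemma measurableSet_isUndirected : MeasurableSet {η | IsUndirected η} := by
  simp only [IsUndirected, ofPred_forall]
  exact .iInter fun u ↦ .iInter fun v ↦ measurableSet_eq_fun (by fun_prop) (by fun_prop)

lemma isUndirected_edgeCfg (adj : V → V → Prop) [Std.Symm adj] (p x : ℝ) :
    IsUndirected (edgeCfg adj p x) := fun u v ↦ by
  have hidx : eIdx u v = eIdx v u := min_comm _ _
  simp only [edgeCfg, edgeU, hidx, Std.Symm.iff (r := adj) u v]

namespace IsUndirected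

lemma conn_symm (hη : IsUndirected η) (h : Conn η u v) : Conn η v u := by
  have : Std.Symm fun a b ↦ η a b = true := ⟨fun a b hab ↦ hη a b ▸ hab⟩
  exact Relation.ReflTransGen.stdSymm.symm _ _ h

lemma clusterRep_eq_iff_conn (hη : IsUndirected η) :
    clusterRep η u = clusterRep η v ↔ Conn η u v := by
  constructor
  · exact fun h ↦ conn_clusterRep.trans (h ▸ hη.conn_symm conn_clusterRep)
  · intro h
    have hmin := (clusterRep_eq_iff.1 (rfl : clusterRep η v = _)).2
    exact clusterRep_eq_iff.2
      ⟨h.trans conn_clusterRep, fun w hw ↦ hmin w ((hη.conn_symm h).trans hw)⟩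

lemma clusterRep_clusterRep (hη : IsUndirected η) (v : V) :
    clusterRep η (clusterRep η v) = clusterRep η v :=
  hη.clusterRep_eq_iff_conn.2 (hη.conn_symm conn_clusterRep)

lemma mem_pCluster_iff (hη : IsUndirected η) :
    u ∈ pCluster η v ↔ clusterRep η u = clusterRep η v :=
  hη.clusterRep_eq_iff_conn.symm.trans eq_comm

end IsUndirected

end Cluster

section Paint

variable {A : Set Config} {η : EdgeCfg} {z : V → Bool}

/-- Colour every cluster with the label of its representative. -/
noncomputable def paint (q : EdgeCfg × (V → Bool)) : Config := (q.1, q.2 ∘ clusterRep q.1)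

lemma measurable_paint : Measurable paint := by
  have heval : Measurable fun q : V × (V → Bool) ↦ q.2 q.1 :=
    measurable_from_prod_countable_right fun w ↦ measurable_pi_apply w
  exact measurable_fst.prodMk <| measurable_pi_iff.2 fun v ↦
    heval.comp (((measurable_clusterRep v).comp measurable_fst).prodMk measurable_snd)

lemma IsUndirected.paint_paint (hη : IsUndirected η) (z : V → Bool) :
    paint (paint (η, z)) = paint (η, z) := by
  ext v
  · rfl
  · simp only [paint, comp_apply, hη.clusterRep_clusterRep]

/-- The event that the label configuration, painted on the clusters of `η`, realizes `A`. -/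
def labelEvent (A : Set Config) (η : EdgeCfg) : Set (V → Bool) := {z | paint (η, z) ∈ A}

lemma dependsOn_labelEvent {W : Set V} (hA : DependsOnColoursIn A W) (η : EdgeCfg) :
    DependsOn (· ∈ labelEvent A η) (clusterRep η '' W) := fun _ _ h ↦
  propext (hA _ _ fun _ hv ↦ h _ (mem_image_of_mem _ hv))

lemma dependsOn_labelEvent_range : DependsOn (· ∈ labelEvent A η) (range (clusterRep η)) :=
  fun z z' h ↦ by
    have hpaint : z ∘ clusterRep η = z' ∘ clusterRep η := funext fun v ↦ h _ (mem_range_self v)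
    simp only [labelEvent, paint, mem_ofPred_eq, hpaint]

lemma isUpperSet_labelEvent (hA : IncreasingColourEvent A) (η : EdgeCfg) :
    IsUpperSet (labelEvent A η) := fun _ _ hle ↦ hA _ _ fun _ h ↦ hle _ h

lemma measurableSet_of_dependsOnColoursIn {W : Set V} (hW : W.Finite)
    (hA : DependsOnColoursIn A W) : MeasurableSet A := by
  let C : Set ColourCfg := {ξ | (fun _ _ ↦ false, ξ) ∈ A}
  have hC : DependsOn (· ∈ C) W := fun _ _ h ↦ propext (hA _ _ h)
  have hpre : A = Prod.snd ⁻¹' C := by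
    ext ω
    exact hA _ _ fun _ _ ↦ rfl
  exact hpre ▸ measurable_snd (measurableSet_of_dependsOn hW hC)

namespace IsUndirected

lemma flipOn_pCluster (hη : IsUndirected η) (z : V → Bool) (v : V) :
    flipOn (pCluster η v) (z ∘ clusterRep η) =
      update z (clusterRep η v) (!z (clusterRep η v)) ∘ clusterRep η := by
  ext u
  simp only [flipOn, hη.mem_pCluster_iff, comp_apply, update_apply]
  split_ifs with hu <;> simp [hu]

lemma isPivotal_paint_iff (hη : IsUndirected η) {v : V} :
    IsPivotal A (paint (η, z)) (pCluster η v) ↔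
      IsPivotalSite (labelEvent A η) z (clusterRep η v) := by
  have hflip := hη.flipOn_pCluster z v
  simp only [IsPivotal, IsPivotalSite, labelEvent, paint, mem_ofPred_eq, hflip,
    exists_apply_eq_apply', true_and]

/-- A label carried by a non-representative paints nothing, so it is never pivotal. -/
lemma clusterRep_eq_of_isPivotalSite (hη : IsUndirected η) {v : V}
    (hv : IsPivotalSite (labelEvent A η) z v) : clusterRep η v = v := by
  obtain ⟨w, rfl⟩ := by_contra fun hrange ↦
    not_isPivotalSite_of_dependsOn dependsOn_labelEvent_range hrange hv
  exact hη.clusterRep_clusterRep w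

lemma numPivotal_paint (hη : IsUndirected η) (A : Set Config) (z : V → Bool) :
    numPivotal A (paint (η, z)) = numPivotalSites (labelEvent A η) z := by
  have himage : {C | IsPivotal A (paint (η, z)) C} =
      pCluster η '' {v | IsPivotalSite (labelEvent A η) z v} := by
    ext C
    constructor
    · intro hC
      obtain ⟨v, rfl⟩ := hC.1
      refine ⟨clusterRep η v, hη.isPivotal_paint_iff.1 hC, ?_⟩
      ext u
      rw [hη.mem_pCluster_iff, hη.clusterRep_clusterRep]
      exact hη.mem_pCluster_iff.symm
    · rintro ⟨v, hv, rfl⟩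
      exact hη.isPivotal_paint_iff.2 ((hη.clusterRep_eq_of_isPivotalSite hv).symm ▸ hv)
  have hinj : InjOn (pCluster η) {v | IsPivotalSite (labelEvent A η) z v} := by
    intro u hu v hv huv
    rw [← hη.clusterRep_eq_of_isPivotalSite hu, ← hη.clusterRep_eq_of_isPivotalSite hv,
      ← hη.mem_pCluster_iff, ← huv]
    exact .refl
  rw [numPivotal, himage, hinj.encard_image, numPivotalSites]

end IsUndirected

end Paint

/-! ### The law of the model -/

section Law

variable (adj : V → V → Prop) (p r : ℝ)

lemma map_edgeUnif_vtxU :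
    base.map (fun x ↦ (fun i ↦ unif (2 * i) x, fun v ↦ vtxU v x)) =
      (Measure.infinitePi fun _ : ℕ ↦ base).prod (Measure.infinitePi fun _ : V ↦ base) := by
  have hodd : Injective fun v : V ↦ 2 * encode v + 1 := fun u v h ↦
    encode_injective (Nat.eq_of_mul_eq_mul_left two_pos (Nat.add_right_cancel h))
  rw [← map_infinitePi_of_disjoint base (mul_right_injective₀ (two_ne_zero' ℕ)) hodd
    fun i v ↦ by lia, ← map_unif_base, Measure.map_map (by fun_prop) (by fun_prop)]
  rfl

lemma measurable_openEdges {α : Type*} [MeasurableSpace α] {U : V → V → α → ℝ}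
    (hU : ∀ u v, Measurable (U u v)) :
    Measurable fun a u v ↦ boolOf (adj u v) && boolOf (U u v a < p) :=
  measurable_pi_iff.2 fun u ↦ measurable_pi_iff.2 fun v ↦
    (Measurable.of_discrete (f := fun b ↦ boolOf (adj u v) && b)).comp
      (measurable_boolOf (hU u v measurableSet_Iio))

lemma measurable_edgeCfg : Measurable (edgeCfg adj p) :=
  measurable_openEdges adj p fun _ _ ↦ measurable_unif _

instance : IsProbabilityMeasure (edgeMeasure adj p) :=
  Measure.isProbabilityMeasure_map (measurable_edgeCfg adj p).aemeasurable

lemma measurable_boolOf_vtxU_lt : Measurable fun x v ↦ boolOf (vtxU v x < r) :=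
  measurable_pi_iff.2 fun _ ↦ measurable_boolOf (measurable_unif _ measurableSet_Iio)

lemma map_edgeCfg_boolOf_vtxU_lt :
    base.map (fun x ↦ (edgeCfg adj p x, fun v ↦ boolOf (vtxU v x < r))) =
      (edgeMeasure adj p).prod (siteMeasure V r) := by
  let edges (y : ℕ → ℝ) : EdgeCfg := fun u v ↦ boolOf (adj u v) && boolOf (y (eIdx u v) < p)
  let labels (y : V → ℝ) : V → Bool := fun v ↦ boolOf (y v < r)
  have hedges : Measurable edges := measurable_openEdges adj p fun _ _ ↦ measurable_pi_apply _
  have hlabels : Measurable labels := measurable_pi_iff.2 fun v ↦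
    measurable_boolOf (measurable_pi_apply v measurableSet_Iio)
  have hunif : Measurable fun x ↦ (fun i ↦ unif (2 * i) x, fun v ↦ vtxU v x) := by
    unfold vtxU
    fun_prop
  have hjoint : base.map (fun x ↦ (edgeCfg adj p x, fun v ↦ boolOf (vtxU v x < r))) =
      ((Measure.infinitePi fun _ : ℕ ↦ base).map edges).prod (siteMeasure V r) := by
    rw [← map_boolOf_lt_infinitePi_base, Measure.map_prod_map _ _ hedges hlabels,
      ← map_edgeUnif_vtxU, Measure.map_map (hedges.prodMap hlabels) hunif]
    rfl
  have hmarginal : edgeMeasure adj p = (Measure.infinitePi fun _ : ℕ ↦ base).map edges := by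
    have := congrArg Measure.fst hjoint
    rwa [Measure.fst_map_prodMk (measurable_boolOf_vtxU_lt r), Measure.fst_prod] at this
  rw [hmarginal, hjoint]

lemma daCMeasure_eq_map_paint :
    DaCMeasure adj p r = ((edgeMeasure adj p).prod (siteMeasure V r)).map paint := by
  rw [← map_edgeCfg_boolOf_vtxU_lt, Measure.map_map measurable_paint
    ((measurable_edgeCfg adj p).prodMk (measurable_boolOf_vtxU_lt r))]
  rfl

variable {A : Set Config}

lemma measurable_siteMeasure_labelEvent (hA : MeasurableSet A) :
    Measurable fun η ↦ siteMeasure V r (labelEvent A η) :=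
  measurable_measure_prodMk_left (measurable_paint hA)

lemma toReal_daCMeasure_eq_integral (hA : MeasurableSet A) :
    (DaCMeasure adj p r A).toReal =
      ∫ η, (siteMeasure V r).real (labelEvent A η) ∂edgeMeasure adj p := by
  rw [daCMeasure_eq_map_paint, Measure.map_apply measurable_paint hA,
    Measure.prod_apply (measurable_paint hA)]
  exact (integral_toReal (measurable_siteMeasure_labelEvent r hA).aemeasurable
    (ae_of_all _ fun η ↦ measure_lt_top _ _)).symm

lemma measurable_numPivotalSites_labelEvent (hA : MeasurableSet A) :
    Measurable fun q : EdgeCfg × (V → Bool) ↦ numPivotalSites (labelEvent A q.1) q.2 := by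
  have hset (v : V) (b : Bool) :
      MeasurableSet {q : EdgeCfg × (V → Bool) | update q.2 v b ∈ labelEvent A q.1} :=
    (measurable_paint.comp (measurable_fst.prodMk
      ((measurable_update_const v b).comp measurable_snd))) hA
  refine measurable_encard fun v ↦ ?_
  simp only [mem_ofPred_eq, isPivotalSite_iff]
  exact ((hset v true).iff (hset v false)).compl

variable [Std.Symm adj]

lemma ae_isUndirected : ∀ᵐ η ∂edgeMeasure adj p, IsUndirected η :=
  (ae_map_iff (measurable_edgeCfg adj p).aemeasurable measurableSet_isUndirected).2
    (ae_of_all _ (isUndirected_edgeCfg adj p))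

lemma ae_isUndirected_and_paint_eq :
    ∀ᵐ ω ∂DaCMeasure adj p r, IsUndirected ω.1 ∧ paint ω = ω := by
  have hset : MeasurableSet {ω : Config | IsUndirected ω.1 ∧ paint ω = ω} :=
    (measurable_fst measurableSet_isUndirected).inter
      (measurableSet_eq_fun measurable_paint measurable_id)
  rw [daCMeasure_eq_map_paint, ae_map_iff measurable_paint.aemeasurable hset]
  filter_upwards [Measure.quasiMeasurePreserving_fst.ae (ae_isUndirected adj p)] with q hq
  exact ⟨hq, hq.paint_paint q.2⟩

lemma lintegral_numPivotal (hA : MeasurableSet A) :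
    ∫⁻ ω, numPivotal A ω ∂DaCMeasure adj p r =
      ∫⁻ η, ∫⁻ z, numPivotalSites (labelEvent A η) z ∂siteMeasure V r ∂edgeMeasure adj p := by
  have hmeas := measurable_numPivotalSites_labelEvent hA
  calc ∫⁻ ω, numPivotal A ω ∂DaCMeasure adj p r
    _ = ∫⁻ ω, numPivotalSites (labelEvent A ω.1) ω.2 ∂DaCMeasure adj p r := by
      refine lintegral_congr_ae ?_
      filter_upwards [ae_isUndirected_and_paint_eq adj p r] with ω ⟨hundir, hpaint⟩
      rw [← hundir.numPivotal_paint, hpaint]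
    _ = ∫⁻ q, numPivotalSites (labelEvent A q.1) q.2
        ∂(edgeMeasure adj p).prod (siteMeasure V r) := by
      rw [daCMeasure_eq_map_paint, lintegral_map hmeas measurable_paint]
      refine lintegral_congr_ae ?_
      filter_upwards [Measure.quasiMeasurePreserving_fst.ae (ae_isUndirected adj p)] with q hq
      calc numPivotalSites (labelEvent A q.1) (paint q).2
        _ = numPivotal A (paint (paint q)) := (hq.numPivotal_paint A _).symm
        _ = numPivotal A (paint q) := by rw [hq.paint_paint]
        _ = numPivotalSites (labelEvent A q.1) q.2 := hq.numPivotal_paint A _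
    _ = _ := lintegral_prod _ hmeas.aemeasurable

end Law

instance : Std.Symm SqAdj where
  symm u v huv := by
    rw [SqAdj, ← neg_sub u.1, ← neg_sub u.2, neg_sq, neg_sq]
    exact huv

lemma lintegral_numPivotalSites_labelEvent_le {W : Set V} {A : Set Config}
    (hA : DependsOnColoursIn A W) (η : EdgeCfg) (r : ℝ) :
    ∫⁻ z, numPivotalSites (labelEvent A η) z ∂siteMeasure V r ≤ W.encard := by
  calc _ ≤ ∫⁻ _ : V → Bool, W.encard ∂siteMeasure V r := lintegral_mono fun z ↦
        (numPivotalSites_le (dependsOn_labelEvent hA η) z).trans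
          (ENat.toENNReal_le.2 (encard_image_le _ _))
    _ = W.encard := by simp

theorem russo_formula_general (adj : V → V → Prop) [Std.Symm adj] (p : ℝ) {W : Set V}
    (hW : W.Finite) {A : Set Config} (hAinc : IncreasingColourEvent A)
    (hAdep : DependsOnColoursIn A W) {r : ℝ} (hr : r ∈ Ioo (0 : ℝ) 1) :
    HasDerivAt (fun r' : ℝ ↦ (DaCMeasure adj p r' A).toReal)
      (∫⁻ ω, numPivotal A ω ∂DaCMeasure adj p r).toReal r := by
  have hA : MeasurableSet A := measurableSet_of_dependsOnColoursIn hW hAdep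
  have hWtop : (W.encard : ℝ≥0∞) ≠ ∞ := by simpa using hW
  have hprob (s : ℝ) := (measurable_siteMeasure_labelEvent s hA).ennreal_toReal.aestronglyMeasurable
    (μ := edgeMeasure adj p)
  have hpiv :=
    (measurable_numPivotalSites_labelEvent hA).lintegral_prod_right' (ν := siteMeasure V r)
  have hbound (η : EdgeCfg) (s : ℝ) := lintegral_numPivotalSites_labelEvent_le hAdep η s
  simp only [toReal_daCMeasure_eq_integral adj p _ hA, lintegral_numPivotal adj p r hA]
  rw [← integral_toReal hpiv.aemeasurable
    (ae_of_all _ fun η ↦ (hbound η r).trans_lt hWtop.lt_top)]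
  refine (hasDerivAt_integral_of_dominated_loc_of_deriv_le
    (F' := fun s η ↦ (∫⁻ z, numPivotalSites (labelEvent A η) z ∂siteMeasure V s).toReal)
    (bound := fun _ ↦ (W.encard : ℝ≥0∞).toReal) (Ioo_mem_nhds hr.1 hr.2)
    (.of_forall hprob) ?_ hpiv.ennreal_toReal.aestronglyMeasurable ?_
    (integrable_const _) ?_).2
  · refine .of_bound (hprob r) 1 (ae_of_all _ fun η ↦ ?_)
    rw [Real.norm_of_nonneg ENNReal.toReal_nonneg]
    exact measureReal_le_one
  · refine ae_of_all _ fun η s _ ↦ ?_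
    rw [Real.norm_of_nonneg ENNReal.toReal_nonneg]
    exact ENNReal.toReal_mono hWtop (hbound η s)
  · exact ae_of_all _ fun η s hs ↦ hasDerivAt_siteMeasure_real_of_isUpperSet (hW.image _)
      (dependsOn_labelEvent hAdep η) (isUpperSet_labelEvent hAinc η) hs

/-- **Russo's formula for the DaC model.** If `A` is an increasing event
depending only on the colours of the vertices of a finite set `W`, then for
every `r ∈ (0,1)` the function `r ↦ ℙ_{p,r}(A)` is differentiable at `r` with
derivative the expected number of pivotal `p`-clusters. -/
theorem russo_formula (p : ℝ) (hp0 : 0 ≤ p) (hp1 : p ≤ 1)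
    (W : Set V) (hW : W.Finite)
    (A : Set Config) (hAinc : IncreasingColourEvent A)
    (hAdep : DependsOnColoursIn A W)
    (r : ℝ) (hr : r ∈ Set.Ioo (0 : ℝ) 1) :
    HasDerivAt (fun r' : ℝ => (DaCMeasure SqAdj p r' A).toReal)
      ((∫⁻ ω, numPivotal A ω ∂(DaCMeasure SqAdj p r)).toReal) r :=
  russo_formula_general SqAdj p hW hAinc hAdep hr

end DaC
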